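/- arXiv:math/0703156 — 2 statements merged into one kernel-verified Lean document; each statement's English description precedes it below -/
import Mathlib

section
/- Let P ⊆ ℝⁿ be a uniformly discrete set of finite local complexity and let ψ : P → ℝᵐ be strongly P-equivariant. Then there exists a smooth (C^∞) strongly P-equivariant function φ : ℝⁿ → ℝᵐ whose restriction to P equals ψ. -/
/-!
Let `δ` be a lower bound for the distances in `P`. Place at every `p ∈ P` a copy of one smooth bump
of height `1` and radius `δ`, and give it the weight `ψ p`. The family of bumps is locally finite,
so their sum is smooth, and at a point of `P` all bumps but its own vanish. Seen from `x`, the sum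
only involves the `δ`-patch around `x` and the weights at the points of that patch; a weight is
determined by the `R`-patch of its point, hence the sum by the `(R + δ)`-patch around `x`.
-/

open Metric Set

noncomputable section

/-- Euclidean space ℝⁿ. -/
abbrev Euc (n : ℕ) := EuclideanSpace ℝ (Fin n)

/-- The translate `P - x = {p - x : p ∈ P}`. -/
def shiftSet {n : ℕ} (P : Set (Euc n)) (x : Euc n) : Set (Euc n) :=
  (fun p => p - x) '' P

/-- The `r`-patch of `P` around `x`: `B_r[P - x] = B(0,r) ∩ (P - x)`. -/
def patch {n : ℕ} (P : Set (Euc n)) (r : ℝ) (x : Euc n) : Set (Euc n) :=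
  ball (0 : Euc n) r ∩ shiftSet P x

/-- `P` is uniformly discrete: there is a positive minimal distance between points. -/
def UnifDiscrete {n : ℕ} (P : Set (Euc n)) : Prop :=
  ∃ δ > 0, ∀ p ∈ P, ∀ q ∈ P, p ≠ q → δ ≤ ‖p - q‖

/-- `P` is relatively dense: every ball of radius `R` contains a point of `P`. -/
def RelDense {n : ℕ} (P : Set (Euc n)) : Prop :=
  ∃ R > 0, ∀ x : Euc n, ∃ p ∈ P, ‖p - x‖ < R

/-- `P` has finite local complexity: for each `r > 0`, only finitely many `r`-patches
around points of `P`. -/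
def FLC {n : ℕ} (P : Set (Euc n)) : Prop :=
  ∀ r > 0, {s : Set (Euc n) | ∃ x ∈ P, s = patch P r x}.Finite

/-- `f` is `P`-equivariant with range `R`. -/
def EquivRange {n : ℕ} {F : Type*} (P : Set (Euc n)) (R : ℝ) (f : Euc n → F) : Prop :=
  ∀ x y : Euc n, patch P R x = patch P R y → f x = f y

/-- `f` is strongly `P`-equivariant: `P`-equivariant with some finite range `R > 0`. -/
def StrongEquiv {n : ℕ} {F : Type*} (P : Set (Euc n)) (f : Euc n → F) : Prop :=
  ∃ R > 0, EquivRange P R f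

/-- `f`, viewed as a function on the subset `Q`, is `P`-equivariant with range `R`. -/
def EquivRangeOn {n : ℕ} {F : Type*} (P Q : Set (Euc n)) (R : ℝ) (f : Euc n → F) : Prop :=
  ∀ x ∈ Q, ∀ y ∈ Q, patch P R x = patch P R y → f x = f y

/-- `f`, viewed as a function on the subset `Q`, is strongly `P`-equivariant. -/
def StrongEquivOn {n : ℕ} {F : Type*} (P Q : Set (Euc n)) (f : Euc n → F) : Prop :=
  ∃ R > 0, EquivRangeOn P Q R f

/-- `Q` is locally derivable from `P`. -/
def LocallyDerivable {n : ℕ} (P Q : Set (Euc n)) : Prop :=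
  ∃ R > 0, ∀ x y : Euc n, patch P R x = patch P R y →
    ({0} : Set (Euc n)) ∩ shiftSet Q x = ({0} : Set (Euc n)) ∩ shiftSet Q y

/-- Hypothesis (H): for every `r > 0` there is `r' > 0` such that for all `x`,
`B(φ(x), r) ∩ φ(P) ⊆ φ(B(x, r') ∩ P)`. -/
def HypoH {n : ℕ} (P : Set (Euc n)) (φ : Euc n → Euc n) : Prop :=
  ∀ r > 0, ∃ r' > 0, ∀ x : Euc n, ball (φ x) r ∩ (φ '' P) ⊆ φ '' (ball x r' ∩ P)

/-- The pattern metric `D` on closed subsets of ℝⁿ. -/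
def patternDist {n : ℕ} (A B : Set (Euc n)) : ℝ :=
  sInf {ε : ℝ | 0 < ε ∧ Metric.hausdorffDist
    ((ball (0 : Euc n) (1 / ε) ∩ A) ∪ sphere (0 : Euc n) (1 / ε))
    ((ball (0 : Euc n) (1 / ε) ∩ B) ∪ sphere (0 : Euc n) (1 / ε)) ≤ ε}

/-- A continuous `f : ℝⁿ → ℝⁿ` is weakly `P`-equivariant if it is uniformly approximated
by strongly `P`-equivariant continuous functions. -/
def WeakEquiv {n : ℕ} (P : Set (Euc n)) (f : Euc n → Euc n) : Prop :=
  ∀ ε > 0, ∃ g : Euc n → Euc n, Continuous g ∧ StrongEquiv P g ∧ ∀ x : Euc n, ‖f x - g x‖ < ε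

/-- `P` is aperiodic: the only translation fixing `P` is `0`. -/
def IsAperiodicSet {n : ℕ} (P : Set (Euc n)) : Prop :=
  ∀ x : Euc n, shiftSet P x = P → x = 0

open Function

theorem contDiff_finsum {𝕜 ι E F : Type*} [NontriviallyNormedField 𝕜]
    [NormedAddCommGroup E] [NormedSpace 𝕜 E] [NormedAddCommGroup F] [NormedSpace 𝕜 F]
    {k : WithTop ℕ∞} {f : ι → E → F} (hf : ∀ i, ContDiff 𝕜 k (f i))
    (hfin : LocallyFinite fun i => support (f i)) :
    ContDiff 𝕜 k fun x => ∑ᶠ i, f i x :=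
  (contMDiff_finsum (fun i => (hf i).contMDiff) hfin).contDiff

theorem locallyFinite_ball_of_pairwise_le_dist {X : Type*} [MetricSpace X] [ProperSpace X]
    {s : Set X} {δ : ℝ} (hδ : 0 < δ) (hs : s.Pairwise fun p q => δ ≤ dist p q) (r : ℝ) :
    LocallyFinite fun p : s => ball (p : X) r := by
  intro x
  have hdiscrete : IsDiscrete s :=
    ⟨.of_forall_le_dist hδ fun p q hpq => hs p.2 q.2 (Subtype.coe_ne_coe.2 hpq)⟩
  have hfinite : (ball x (r + 1) ∩ s).Finite :=
    finite_isBounded_inter_isClosed hdiscrete isBounded_ball (isClosed_of_pairwise_le_dist hδ hs)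
  refine ⟨ball x 1, ball_mem_nhds x one_pos,
    (hfinite.preimage Subtype.val_injective.injOn).subset ?_⟩
  rintro p ⟨y, hyp, hyx⟩
  exact ⟨(dist_triangle_left (p : X) x y).trans_lt (add_lt_add hyp hyx), p.2⟩

section Patch

variable {n : ℕ} {P : Set (Euc n)} {r s δ : ℝ} {x y p v : Euc n}

theorem mem_patch : v ∈ patch P r x ↔ ‖v‖ < r ∧ v + x ∈ P := by
  simp only [patch, shiftSet, mem_inter_iff, mem_ball_zero_iff, mem_image, sub_eq_iff_eq_add,
    exists_eq_right]

theorem patch_add_eq_patch_add (h : patch P (r + s) x = patch P (r + s) y) (hv : ‖v‖ < r) :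
    patch P s (v + x) = patch P s (v + y) := by
  ext w
  rw [mem_patch, mem_patch, and_congr_right_iff]
  intro hw
  have hwv : ‖w + v‖ < r + s :=
    (norm_add_le w v).trans_lt ((add_comm ‖w‖ ‖v‖).trans_lt (add_lt_add hv hw))
  simpa only [mem_patch, hwv, true_and, add_assoc] using Set.ext_iff.1 h (w + v)

theorem patch_eq_singleton_zero (hδ : 0 < δ) (hP : P.Pairwise fun p q => δ ≤ dist p q)
    (hp : p ∈ P) : patch P δ p = {0} := by
  ext v
  rw [mem_patch, mem_singleton_iff]
  refine ⟨fun ⟨hv, hvp⟩ => ?_, fun hv => by simpa only [hv, norm_zero, zero_add] using ⟨hδ, hp⟩⟩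
  by_contra hne
  have hle : δ ≤ dist (v + p) p := hP hvp hp (add_ne_right.2 hne)
  exact hv.not_ge (by rwa [dist_eq_norm, add_sub_cancel_right] at hle)

end Patch

/-- The superposition of the copies of the profile `b` centred at the points of `P`, the copy at
`p` having weight `ψ p`. As a `finsum`, it is `0` at places where infinitely many copies are
nonzero. The argument `p - x` of `b`, rather than `x - p`, is the position of `p` in `P - x`. -/
def bumpSum {E F : Type*} [AddGroup E] [AddCommMonoid F] [SMul ℝ F]
    (P : Set E) (b : E → ℝ) (ψ : E → F) (x : E) : F :=
  ∑ᶠ p ∈ P, b (p - x) • ψ p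

theorem contDiff_bumpSum {E F : Type*} [NormedAddCommGroup E] [NormedSpace ℝ E]
    [NormedAddCommGroup F] [NormedSpace ℝ F] {k : WithTop ℕ∞} {P : Set E} {b : E → ℝ} {r : ℝ}
    (hbk : ContDiff ℝ k b) (hb : support b ⊆ ball 0 r)
    (hP : LocallyFinite fun p : P => ball (p : E) r) (ψ : E → F) :
    ContDiff ℝ k (bumpSum P b ψ) := by
  have hsupport (p : P) : (support fun x => b (p - x) • ψ p) ⊆ ball (p : E) r := fun x hx =>
    mem_ball'.2 (dist_eq_norm (p : E) x ▸ mem_ball_zero_iff.1 (hb (left_ne_zero_of_smul hx)))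
  have hsum : ContDiff ℝ k fun x => ∑ᶠ p : P, b (p - x) • ψ p :=
    contDiff_finsum (fun p => (hbk.comp (contDiff_const.sub contDiff_id)).smul contDiff_const)
      (hP.subset hsupport)
  convert hsum using 2 with x
  exact (finsum_set_coe_eq_finsum_mem P).symm

section BumpSum

variable {n : ℕ} {F : Type*} [AddCommMonoid F] [Module ℝ F] {P : Set (Euc n)} {b : Euc n → ℝ}
  {r R : ℝ}

theorem bumpSum_eq_finsum_patch (hb : support b ⊆ ball 0 r) (ψ : Euc n → F) (x : Euc n) :
    bumpSum P b ψ x = ∑ᶠ v ∈ patch P r x, b v • ψ (v + x) := by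
  calc bumpSum P b ψ x = ∑ᶠ v ∈ shiftSet P x, b v • ψ (v + x) := by
        rw [shiftSet, finsum_mem_image (sub_left_injective.injOn)]
        simp only [sub_add_cancel, bumpSum]
    _ = ∑ᶠ v ∈ patch P r x, b v • ψ (v + x) :=
        finsum_mem_inter_support_eq' _ _ _ fun v hv =>
          (and_iff_right (hb (left_ne_zero_of_smul hv))).symm

theorem equivRange_bumpSum (hb : support b ⊆ ball 0 r) (hR : 0 < R) {ψ : Euc n → F}
    (hψ : EquivRangeOn P P R ψ) : EquivRange P (R + r) (bumpSum P b ψ) := by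
  intro x y h
  have hpatch : patch P r x = patch P r y := by
    simpa only [zero_add] using patch_add_eq_patch_add h (norm_zero.trans_lt hR)
  rw [bumpSum_eq_finsum_patch hb, bumpSum_eq_finsum_patch hb]
  refine finsum_mem_congr hpatch fun v hv => ?_
  have hvx : v + x ∈ P := (mem_patch.1 (hpatch ▸ hv)).2
  have hvy : v + y ∈ P := (mem_patch.1 hv).2
  rw [hψ _ hvx _ hvy (patch_add_eq_patch_add (add_comm R r ▸ h) (mem_patch.1 hv).1)]

theorem bumpSum_apply_of_patch_eq_singleton_zero (hb : support b ⊆ ball 0 r) (ψ : Euc n → F)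
    {p : Euc n} (hp : patch P r p = {0}) : bumpSum P b ψ p = b 0 • ψ p := by
  rw [bumpSum_eq_finsum_patch hb, hp, finsum_mem_singleton, zero_add]

end BumpSum

theorem stmt1_general {n : ℕ} {F : Type*} [NormedAddCommGroup F] [NormedSpace ℝ F]
    {P : Set (Euc n)} (hUD : UnifDiscrete P) {ψ : Euc n → F} (hψ : StrongEquivOn P P ψ) :
    ∃ φ : Euc n → F, ContDiff ℝ (⊤ : ℕ∞) φ ∧ StrongEquiv P φ ∧ ∀ p ∈ P, φ p = ψ p := by
  obtain ⟨δ, hδ, hsep⟩ := hUD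
  obtain ⟨R, hR, hψR⟩ := hψ
  have hP : P.Pairwise fun p q => δ ≤ dist p q := fun p hp q hq hpq =>
    (hsep p hp q hq hpq).trans_eq (dist_eq_norm p q).symm
  let b : ContDiffBump (0 : Euc n) := ⟨δ / 2, δ, half_pos hδ, half_lt_self hδ⟩
  have hb : support b ⊆ ball 0 δ := b.support_eq.subset
  have hb_zero : b 0 = 1 := b.one_of_mem_closedBall (mem_closedBall_self b.rIn_pos.le)
  refine ⟨bumpSum P b ψ,
    contDiff_bumpSum b.contDiff hb (locallyFinite_ball_of_pairwise_le_dist hδ hP δ) ψ,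
    ⟨R + δ, add_pos hR hδ, equivRange_bumpSum hb hR hψR⟩, fun p hp => ?_⟩
  rw [bumpSum_apply_of_patch_eq_singleton_zero hb ψ (patch_eq_singleton_zero hδ hP hp),
    hb_zero, one_smul]

theorem stmt1 {n m : ℕ} (P : Set (Euc n)) (hUD : UnifDiscrete P) (hFLC : FLC P)
    (ψ : Euc n → Euc m) (hψ : StrongEquivOn P P ψ) :
    ∃ φ : Euc n → Euc m, ContDiff ℝ (⊤ : ℕ∞) φ ∧ StrongEquiv P φ ∧ ∀ p ∈ P, φ p = ψ p :=
  stmt1_general hUD hψ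
end
end

section
/- Let P ⊆ ℝⁿ be a uniformly discrete set of finite local complexity and let φ : ℝⁿ → ℝⁿ be a differentiable function whose derivative map dφ is strongly P-equivariant. If φ satisfies Hypothesis (H) for P, then for every r > 0 there exists r' > 0 such that for all x, y ∈ ℝⁿ: B_{r'}[P − x] = B_{r'}[P − y] implies B_r[φ(P) − φ(x)] = B_r[φ(P) − φ(y)]. -/
open Metric Set

noncomputable section

/-!
If `P` looks the same around `x` and `y` out to distance `s + R`, it looks the same out to distance
`R` around `x + h` and `y + h` whenever `‖h‖ < s`. A derivative that is equivariant with range `R`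
then takes the same values along the two `s`-balls, so by the mean value theorem
`φ (x + h) - φ x = φ (y + h) - φ y`. By Hypothesis (H), every point of `φ '' P` close to `φ x` is
`φ (x + h)` with `x + h ∈ P` and `‖h‖ < s`; as `y + h ∈ P` too, it has the same position
relative to `φ x` as `φ (y + h)` has relative to `φ y`.
-/

section Patch

variable {E : Type*} [SeminormedAddCommGroup E]

/-- The patch `B(0, r) ∩ (P - x)` of a subset `P` of a seminormed group; on `ℝⁿ` it unfolds to the
same set as `patch`. -/
def centeredPatch (P : Set E) (r : ℝ) (x : E) : Set E :=
  ball 0 r ∩ (fun p => p - x) '' P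

/-- Equivariance of `f` with range `R` with respect to a subset `P` of a seminormed group: the value
`f x` depends only on the `R`-patch of `P` around `x`. It extends `EquivRange` beyond `ℝⁿ`. -/
def PatchEquivariant {α : Type*} (P : Set E) (R : ℝ) (f : E → α) : Prop :=
  ∀ x y, centeredPatch P R x = centeredPatch P R y → f x = f y

theorem mem_centeredPatch {P : Set E} {r : ℝ} {x v : E} :
    v ∈ centeredPatch P r x ↔ ‖v‖ < r ∧ x + v ∈ P := by
  simp [centeredPatch, sub_eq_iff_eq_add']

theorem add_mem_iff_of_centeredPatch_eq {P : Set E} {r : ℝ} {x y v : E}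
    (hxy : centeredPatch P r x = centeredPatch P r y) (hv : ‖v‖ < r) :
    x + v ∈ P ↔ y + v ∈ P := by
  simpa only [mem_centeredPatch, hv, true_and] using Set.ext_iff.mp hxy v

theorem centeredPatch_add_eq {P : Set E} {s R : ℝ} {x y h : E}
    (hxy : centeredPatch P (s + R) x = centeredPatch P (s + R) y) (hh : ‖h‖ < s) :
    centeredPatch P R (x + h) = centeredPatch P R (y + h) := by
  ext k
  simp only [mem_centeredPatch, add_assoc]
  exact and_congr_right fun hk =>
    add_mem_iff_of_centeredPatch_eq hxy ((norm_add_le h k).trans_lt (add_lt_add hh hk))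

end Patch

section NormedSpace

variable {E F : Type*} [NormedAddCommGroup E] [NormedSpace ℝ E] [NormedAddCommGroup F]
  [NormedSpace ℝ F] {φ : E → F}

theorem sub_eq_sub_of_fderiv_add_eq (hφ : Differentiable ℝ φ) {U : Set E} (hU : IsOpen U)
    (hUc : IsPreconnected U) (hU₀ : 0 ∈ U) {x y h : E}
    (hderiv : ∀ k ∈ U, fderiv ℝ φ (x + k) = fderiv ℝ φ (y + k)) (hh : h ∈ U) :
    φ (x + h) - φ x = φ (y + h) - φ y := by
  have hdiff (a : E) : DifferentiableOn ℝ (fun k => φ (a + k)) U :=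
    (hφ.comp (differentiable_id.const_add a)).differentiableOn
  obtain ⟨c, hc⟩ := hU.exists_eq_add_of_fderiv_eq hUc (hdiff x) (hdiff y) fun k hk => by
    simpa only [fderiv_comp_add_left] using hderiv k hk
  have hc₀ : φ x = φ y + c := by simpa only [add_zero] using hc hU₀
  have hch : φ (x + h) = φ (y + h) + c := hc hh
  rw [hc₀, hch, add_sub_add_right_eq_sub]

theorem PatchEquivariant.sub_eq_sub {P : Set E} {s R : ℝ}
    (hR : PatchEquivariant P R (fderiv ℝ φ)) (hφ : Differentiable ℝ φ) {x y h : E}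
    (hxy : centeredPatch P (s + R) x = centeredPatch P (s + R) y) (hh : ‖h‖ < s) :
    φ (x + h) - φ x = φ (y + h) - φ y :=
  sub_eq_sub_of_fderiv_add_eq hφ isOpen_ball (convex_ball (0 : E) s).isPreconnected
    (mem_ball_self ((norm_nonneg h).trans_lt hh))
    (fun _ hk => hR _ _ (centeredPatch_add_eq hxy (mem_ball_zero_iff.mp hk)))
    (mem_ball_zero_iff.mpr hh)

theorem PatchEquivariant.centeredPatch_image_subset {P : Set E} {r s R : ℝ}
    (hR : PatchEquivariant P R (fderiv ℝ φ)) (hφ : Differentiable ℝ φ) (hR₀ : 0 ≤ R) {x y : E}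
    (hs : ball (φ x) r ∩ φ '' P ⊆ φ '' (ball x s ∩ P))
    (hxy : centeredPatch P (s + R) x = centeredPatch P (s + R) y) :
    centeredPatch (φ '' P) r (φ x) ⊆ centeredPatch (φ '' P) r (φ y) := by
  intro v hv
  obtain ⟨hvr, hvP⟩ := mem_centeredPatch.mp hv
  obtain ⟨q, ⟨hqx, hqP⟩, hqv⟩ := hs ⟨by simpa using hvr, hvP⟩
  obtain ⟨h, rfl⟩ : ∃ h, q = x + h := ⟨q - x, (add_sub_cancel x q).symm⟩
  have hh : ‖h‖ < s := by simpa using hqx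
  have hyP : y + h ∈ P :=
    (add_mem_iff_of_centeredPatch_eq hxy (hh.trans_le (le_add_of_nonneg_right hR₀))).mp hqP
  have hv_eq : φ (y + h) - φ y = v := by
    rw [← hR.sub_eq_sub hφ hxy hh, hqv, add_sub_cancel_left]
  exact mem_centeredPatch.mpr ⟨hvr, y + h, hyP, sub_eq_iff_eq_add'.mp hv_eq⟩

theorem stmt7_general {P : Set E} (hφ : Differentiable ℝ φ)
    (hdφ : ∃ R > 0, PatchEquivariant P R (fderiv ℝ φ))
    (hH : ∀ r > 0, ∃ s > 0, ∀ x, ball (φ x) r ∩ φ '' P ⊆ φ '' (ball x s ∩ P)) :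
    ∀ r > 0, ∃ r' > 0, ∀ x y, centeredPatch P r' x = centeredPatch P r' y →
      centeredPatch (φ '' P) r (φ x) = centeredPatch (φ '' P) r (φ y) := by
  obtain ⟨R, hR₀, hR⟩ := hdφ
  intro r hr
  obtain ⟨s, hs₀, hs⟩ := hH r hr
  exact ⟨s + R, add_pos hs₀ hR₀, fun x y hxy => Subset.antisymm
    (hR.centeredPatch_image_subset hφ hR₀.le (hs x) hxy)
    (hR.centeredPatch_image_subset hφ hR₀.le (hs y) hxy.symm)⟩

end NormedSpace

theorem stmt7 {n : ℕ} (P : Set (Euc n)) (hUD : UnifDiscrete P) (hFLC : FLC P)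
    (φ : Euc n → Euc n) (hφ : Differentiable ℝ φ)
    (hdφ : StrongEquiv P (fderiv ℝ φ)) (hH : HypoH P φ) :
    ∀ r > 0, ∃ r' > 0, ∀ x y : Euc n, patch P r' x = patch P r' y →
      patch (φ '' P) r (φ x) = patch (φ '' P) r (φ y) :=
  stmt7_general hφ hdφ hH
end
end
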